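/- Let U be a finite set and 𝓕 a family of ℓ-element subsets of U with ℓ = O(1), considered along a sequence of instances with |𝓕| → ∞. Assume that for every k with 1 ≤ k ≤ ℓ−1 and every k-element subset R of U, the number of elements of 𝓕 that contain R is O(|𝓕|^{1−k/ℓ}). Then |𝓕|^{−1/ℓ} is a threshold function for the event Γ that the random subset X contains at least one element of 𝓕, as |𝓕| → ∞. -/

import Mathlib

open Filter Asymptotics

noncomputable def prRandomSubset {α : Type*} (U : Finset α) (θ : ℝ)
    (E : Finset α → Prop) : ℝ :=
  ∑ A ∈ U.powerset,
    @ite ℝ (E A) (Classical.propDecidable _)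
      (θ ^ A.card * (1 - θ) ^ (U.card - A.card)) 0

/-- The probability that a `θ`-random subset of a set of size `n` is a given set of size `k`. -/
noncomputable def subsetWeight (n : ℕ) (θ : ℝ) (k : ℕ) : ℝ :=
  θ ^ k * (1 - θ) ^ (n - k)

section SecondMoment

variable {α : Type*} {U : Finset α} {F : Finset (Finset α)} {θ : ℝ}

lemma subsetWeight_nonneg (h0 : 0 ≤ θ) (h1 : θ ≤ 1) (n k : ℕ) : 0 ≤ subsetWeight n θ k :=
  mul_nonneg (pow_nonneg h0 _) (pow_nonneg (sub_nonneg.2 h1) _)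

lemma sum_subsetWeight (U : Finset α) (θ : ℝ) :
    ∑ A ∈ U.powerset, subsetWeight U.card θ A.card = 1 := by
  simp [subsetWeight, Finset.sum_pow_mul_eq_add_pow]

lemma prRandomSubset_nonneg (h0 : 0 ≤ θ) (h1 : θ ≤ 1) (E : Finset α → Prop) :
    0 ≤ prRandomSubset U θ E := by
  classical
  refine Finset.sum_nonneg fun A _ => ?_
  split_ifs
  · exact subsetWeight_nonneg h0 h1 _ _
  · exact le_rfl

lemma prRandomSubset_add_not (E : Finset α → Prop) :
    prRandomSubset U θ E + prRandomSubset U θ (fun A => ¬ E A) = 1 := by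
  classical
  rw [← sum_subsetWeight U θ, prRandomSubset, prRandomSubset, ← Finset.sum_add_distrib]
  refine Finset.sum_congr rfl fun A _ => ?_
  by_cases h : E A <;> simp [h, subsetWeight]

variable [DecidableEq α]

lemma sum_subsetWeight_superset {S : Finset α} (hS : S ⊆ U) :
    ∑ A ∈ U.powerset, subsetWeight U.card θ A.card * (if S ⊆ A then 1 else 0) = θ ^ S.card := by
  have hfilter : U.powerset.filter (S ⊆ ·) = (U \ S).powerset.image (S ∪ ·) := by
    rw [← Finset.Icc_eq_image_powerset hS]
    ext A
    simp [and_comm]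
  have hdisj : ∀ B ∈ (U \ S).powerset, Disjoint S B := fun B hB =>
    Finset.disjoint_sdiff.mono_right (Finset.mem_powerset.1 hB)
  simp only [mul_ite, mul_one, mul_zero]
  rw [← Finset.sum_filter, hfilter, Finset.sum_image]
  · rw [← mul_one (θ ^ S.card), ← sum_subsetWeight (U \ S) θ, Finset.mul_sum]
    refine Finset.sum_congr rfl fun B hB => ?_
    rw [Finset.card_union_of_disjoint (hdisj B hB), Finset.card_sdiff_of_subset hS,
      subsetWeight, subsetWeight, pow_add, Nat.sub_sub, mul_assoc]
  · intro B hB B' hB' h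
    have hunion : S ∪ B = S ∪ B' := h
    have key : ∀ C ∈ (U \ S).powerset, (S ∪ C) \ S = C := fun C hC => by
      rw [Finset.union_sdiff_left, Finset.sdiff_eq_self_of_disjoint (hdisj C hC).symm]
    rw [← key B hB, ← key B' hB', hunion]

/-- The number of members of the family `F` contained in `A`. -/
def memberCount (F : Finset (Finset α)) (A : Finset α) : ℝ :=
  ∑ S ∈ F, if S ⊆ A then 1 else 0

lemma sum_subsetWeight_memberCount {l : ℕ} (hF : ∀ S ∈ F, S ⊆ U ∧ S.card = l) :
    ∑ A ∈ U.powerset, subsetWeight U.card θ A.card * memberCount F A = F.card * θ ^ l := by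
  simp only [memberCount, Finset.mul_sum]
  rw [Finset.sum_comm, Finset.sum_congr rfl fun S hS => ?_, Finset.sum_const, nsmul_eq_mul]
  rw [sum_subsetWeight_superset (hF S hS).1, (hF S hS).2]

lemma sum_subsetWeight_memberCount_sq (hF : ∀ S ∈ F, S ⊆ U) :
    ∑ A ∈ U.powerset, subsetWeight U.card θ A.card * memberCount F A ^ 2
      = ∑ S ∈ F, ∑ T ∈ F, θ ^ (S ∪ T).card := by
  have hsq : ∀ A, memberCount F A ^ 2 = ∑ S ∈ F, ∑ T ∈ F, if S ∪ T ⊆ A then (1 : ℝ) else 0 := by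
    intro A
    rw [sq, memberCount, Finset.sum_mul_sum]
    refine Finset.sum_congr rfl fun S _ => Finset.sum_congr rfl fun T _ => ?_
    by_cases h : S ⊆ A <;> by_cases hT : T ⊆ A <;> simp [h, hT, Finset.union_subset_iff]
  simp only [hsq, Finset.mul_sum]
  rw [Finset.sum_comm]
  refine Finset.sum_congr rfl fun S hS => ?_
  rw [Finset.sum_comm]
  exact Finset.sum_congr rfl fun T hT =>
    sum_subsetWeight_superset (Finset.union_subset (hF S hS) (hF T hT))

/-- First moment bound. -/
lemma prRandomSubset_exists_le {l : ℕ} (h0 : 0 ≤ θ) (h1 : θ ≤ 1)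
    (hF : ∀ S ∈ F, S ⊆ U ∧ S.card = l) :
    prRandomSubset U θ (fun A => ∃ S ∈ F, S ⊆ A) ≤ F.card * θ ^ l := by
  classical
  rw [← sum_subsetWeight_memberCount hF]
  refine Finset.sum_le_sum fun A _ => ?_
  have hw := subsetWeight_nonneg h0 h1 U.card A.card
  have hterm : ∀ S ∈ F, (0 : ℝ) ≤ if S ⊆ A then 1 else 0 := fun S _ => by positivity
  split_ifs with h
  · obtain ⟨S, hS, hSA⟩ := h
    refine le_mul_of_one_le_right hw ?_
    simpa [hSA, memberCount] using Finset.single_le_sum hterm hS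
  · exact mul_nonneg hw (Finset.sum_nonneg hterm)

/-- Chebyshev bound. -/
lemma prRandomSubset_not_exists_mul_sq_le {l : ℕ} (h0 : 0 ≤ θ) (h1 : θ ≤ 1)
    (hF : ∀ S ∈ F, S ⊆ U ∧ S.card = l) :
    prRandomSubset U θ (fun A => ¬ ∃ S ∈ F, S ⊆ A) * (F.card * θ ^ l) ^ 2
      ≤ ∑ S ∈ F, ∑ T ∈ F, θ ^ (S ∪ T).card - (F.card * θ ^ l) ^ 2 := by
  classical
  set μ : ℝ := F.card * θ ^ l
  have hvar : ∑ S ∈ F, ∑ T ∈ F, θ ^ (S ∪ T).card - μ ^ 2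
      = ∑ A ∈ U.powerset, subsetWeight U.card θ A.card * (memberCount F A - μ) ^ 2 := by
    have hexp : ∀ A : Finset α, subsetWeight U.card θ A.card * (memberCount F A - μ) ^ 2
        = subsetWeight U.card θ A.card * memberCount F A ^ 2
          - 2 * μ * (subsetWeight U.card θ A.card * memberCount F A)
          + μ ^ 2 * subsetWeight U.card θ A.card := fun A => by ring
    simp only [hexp]
    rw [Finset.sum_add_distrib, Finset.sum_sub_distrib, ← Finset.mul_sum, ← Finset.mul_sum,
      sum_subsetWeight, sum_subsetWeight_memberCount hF,
      sum_subsetWeight_memberCount_sq fun S hS => (hF S hS).1]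
    ring
  rw [hvar, prRandomSubset, Finset.sum_mul]
  refine Finset.sum_le_sum fun A _ => ?_
  have hw := subsetWeight_nonneg h0 h1 U.card A.card
  split_ifs with h
  · rw [zero_mul]
    exact mul_nonneg hw (sq_nonneg _)
  · have hzero : memberCount F A = 0 :=
      Finset.sum_eq_zero fun S hS => if_neg fun hSA => h ⟨S, hS, hSA⟩
    rw [hzero, zero_sub, neg_sq, subsetWeight]

/-- Bound on the second moment for a family with few members above any nonempty set. -/
lemma sum_pow_card_union_le {l : ℕ} {a ε C : ℝ} (h0 : 0 ≤ θ) (ha : 0 ≤ a)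
    (hε0 : 0 ≤ ε) (hε1 : ε ≤ 1) (haθ : a ≤ ε * θ) (hC : 0 ≤ C) (hF : ∀ S ∈ F, S.card = l)
    (hcount : ∀ S ∈ F, ∀ R ⊆ S, R.Nonempty →
      ((F.filter (R ⊆ ·)).card : ℝ) ≤ C * (F.card * a ^ R.card)) :
    ∑ S ∈ F, ∑ T ∈ F, θ ^ (S ∪ T).card
      ≤ (1 + C * 2 ^ l * ε) * (F.card * θ ^ l) ^ 2 := by
  have hpair : ∀ S ∈ F, ∀ T ∈ F, θ ^ (S ∪ T).card ≤ θ ^ (2 * l)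
      + ∑ R ∈ S.powerset.erase ∅, (if R ⊆ T then 1 else 0) * θ ^ (2 * l - R.card) := by
    intro S hS T hT
    have hcard : (S ∪ T).card = 2 * l - (S ∩ T).card := by
      have := Finset.card_union_add_card_inter S T
      rw [hF S hS, hF T hT] at this
      omega
    have hnonneg : ∀ R ∈ S.powerset.erase ∅,
        0 ≤ (if R ⊆ T then 1 else 0) * θ ^ (2 * l - R.card) := fun R _ => by positivity
    by_cases h : S ∩ T = ∅
    · rw [hcard, h, Finset.card_empty, Nat.sub_zero]
      exact le_add_of_nonneg_right (Finset.sum_nonneg hnonneg)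
    · have hmem : S ∩ T ∈ S.powerset.erase ∅ := by simp [h, Finset.inter_subset_left]
      have hle := Finset.single_le_sum hnonneg hmem
      rw [if_pos Finset.inter_subset_right, one_mul, ← hcard] at hle
      exact hle.trans (le_add_of_nonneg_left (by positivity))
  have hrow : ∀ S ∈ F, ∑ T ∈ F, θ ^ (S ∪ T).card
      ≤ F.card * θ ^ (2 * l) * (1 + C * 2 ^ l * ε) := by
    intro S hS
    have hsub : ∀ R ∈ S.powerset.erase ∅,
        ∑ T ∈ F, (if R ⊆ T then 1 else 0) * θ ^ (2 * l - R.card)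
          ≤ C * F.card * θ ^ (2 * l) * ε := by
      intro R hR
      obtain ⟨hRne, hRS⟩ := Finset.mem_erase.1 hR
      rw [Finset.mem_powerset] at hRS
      have hRne : R.Nonempty := Finset.nonempty_iff_ne_empty.2 hRne
      have hRl : R.card ≤ 2 * l := by
        have := Finset.card_le_card hRS
        rw [hF S hS] at this
        omega
      rw [← Finset.sum_mul, Finset.sum_boole]
      calc ((F.filter (R ⊆ ·)).card : ℝ) * θ ^ (2 * l - R.card)
          ≤ C * (F.card * a ^ R.card) * θ ^ (2 * l - R.card) := by
            gcongr
            exact hcount S hS R hRS hRne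
        _ ≤ C * (F.card * (ε * θ) ^ R.card) * θ ^ (2 * l - R.card) := by gcongr
        _ = C * F.card * θ ^ (2 * l) * ε ^ R.card := by
            rw [← pow_mul_pow_sub θ hRl, mul_pow]
            ring
        _ ≤ C * F.card * θ ^ (2 * l) * ε := by
            gcongr
            exact pow_le_of_le_one hε0 hε1 hRne.card_ne_zero
    calc ∑ T ∈ F, θ ^ (S ∪ T).card
        ≤ ∑ T ∈ F, (θ ^ (2 * l)
          + ∑ R ∈ S.powerset.erase ∅, (if R ⊆ T then 1 else 0) * θ ^ (2 * l - R.card)) :=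
          Finset.sum_le_sum (hpair S hS)
      _ = F.card * θ ^ (2 * l) + ∑ R ∈ S.powerset.erase ∅,
            ∑ T ∈ F, (if R ⊆ T then 1 else 0) * θ ^ (2 * l - R.card) := by
          rw [Finset.sum_add_distrib, Finset.sum_const, nsmul_eq_mul, Finset.sum_comm]
      _ ≤ F.card * θ ^ (2 * l)
            + (S.powerset.erase ∅).card * (C * F.card * θ ^ (2 * l) * ε) := by
          gcongr
          rw [← nsmul_eq_mul]
          exact Finset.sum_le_card_nsmul _ _ _ hsub
      _ ≤ F.card * θ ^ (2 * l) + 2 ^ l * (C * F.card * θ ^ (2 * l) * ε) := by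
          gcongr
          have := Finset.card_le_card (Finset.erase_subset ∅ S.powerset)
          rw [Finset.card_powerset, hF S hS] at this
          exact_mod_cast this
      _ = F.card * θ ^ (2 * l) * (1 + C * 2 ^ l * ε) := by ring
  calc ∑ S ∈ F, ∑ T ∈ F, θ ^ (S ∪ T).card
      ≤ F.card • (F.card * θ ^ (2 * l) * (1 + C * 2 ^ l * ε)) :=
        Finset.sum_le_card_nsmul _ _ _ hrow
    _ = (1 + C * 2 ^ l * ε) * (F.card * θ ^ l) ^ 2 := by
        rw [nsmul_eq_mul]
        ring

/-- Second moment bound. -/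
lemma prRandomSubset_not_exists_le {l : ℕ} {a ε C : ℝ} (h1 : θ ≤ 1) (ha : 0 < a)
    (hε0 : 0 ≤ ε) (hε1 : ε ≤ 1) (haθ : a ≤ ε * θ) (hC : 0 ≤ C)
    (hne : F.Nonempty) (hF : ∀ S ∈ F, S ⊆ U ∧ S.card = l)
    (hcount : ∀ S ∈ F, ∀ R ⊆ S, R.Nonempty →
      ((F.filter (R ⊆ ·)).card : ℝ) ≤ C * (F.card * a ^ R.card)) :
    prRandomSubset U θ (fun A => ¬ ∃ S ∈ F, S ⊆ A) ≤ C * 2 ^ l * ε := by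
  have h0 : 0 < θ := pos_of_mul_pos_right (ha.trans_le haθ) hε0
  have hcard : (0 : ℝ) < F.card := by exact_mod_cast hne.card_pos
  have hμ : 0 < (F.card * θ ^ l) ^ 2 := by positivity
  refine le_of_mul_le_mul_right ?_ hμ
  have hcheb := prRandomSubset_not_exists_mul_sq_le h0.le h1 hF
  have hsecond := sum_pow_card_union_le h0.le ha.le hε0 hε1 haθ hC (fun S hS => (hF S hS).2) hcount
  linarith

end SecondMoment

lemma mul_rpow_neg_one_div_pow {m : ℝ} (hm : 0 < m) (l k : ℕ) :
    m * (m ^ (-(1 : ℝ) / l)) ^ k = m ^ (1 - (k : ℝ) / l) := by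
  rw [← Real.rpow_mul_natCast hm.le, sub_eq_add_neg, Real.rpow_add hm, Real.rpow_one]
  congr 2
  ring

theorem stmt2 (α : ℕ → Type*) [∀ i, DecidableEq (α i)]
    (U : ∀ i, Finset (α i)) (ℓ : ℕ → ℕ)
    (F : ∀ i, Finset (Finset (α i)))
    (hℓ : ∀ i, 1 ≤ ℓ i)
    (hℓbdd : ∃ C : ℕ, ∀ i, ℓ i ≤ C)
    (hF : ∀ i, ∀ S ∈ F i, S ⊆ U i ∧ S.card = ℓ i)
    (hFtop : Tendsto (fun i => (F i).card) atTop atTop)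
    (hcount : ∃ C : ℝ, 0 < C ∧ ∀ i, ∀ k, 1 ≤ k → k ≤ ℓ i - 1 →
      ∀ R : Finset (α i), R ⊆ U i → R.card = k →
        (((F i).filter (fun S => R ⊆ S)).card : ℝ)
          ≤ C * ((F i).card : ℝ) ^ (1 - (k : ℝ) / (ℓ i : ℝ)))
    (θ : ℕ → ℝ) (hθ : ∀ i, 0 ≤ θ i ∧ θ i ≤ 1) :
    (θ =o[atTop] (fun i => ((F i).card : ℝ) ^ (-(1 : ℝ) / (ℓ i : ℝ))) →
      Tendsto (fun i => prRandomSubset (U i) (θ i) (fun A => ∃ S ∈ F i, S ⊆ A))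
        atTop (nhds 0)) ∧
    ((fun i => ((F i).card : ℝ) ^ (-(1 : ℝ) / (ℓ i : ℝ))) =o[atTop] θ →
      Tendsto (fun i => prRandomSubset (U i) (θ i) (fun A => ∃ S ∈ F i, S ⊆ A))
        atTop (nhds 1)) := by
  obtain ⟨L, hL⟩ := hℓbdd
  obtain ⟨C, hC, hcount⟩ := hcount
  have hpos : ∀ᶠ i in atTop, 0 < (F i).card := hFtop.eventually_gt_atTop 0
  constructor
  · intro h
    rw [Metric.tendsto_nhds]
    intro δ hδ
    have hε : 0 < min 1 (δ / 2) := by positivity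
    filter_upwards [hpos, h.bound hε] with i hm hi
    have hm' : (0 : ℝ) < (F i).card := by exact_mod_cast hm
    have ha := Real.rpow_pos_of_pos hm' (-(1 : ℝ) / (ℓ i : ℝ))
    rw [Real.norm_of_nonneg (hθ i).1, Real.norm_of_nonneg ha.le] at hi
    rw [Real.dist_0_eq_abs, abs_of_nonneg (prRandomSubset_nonneg (hθ i).1 (hθ i).2 _)]
    have hl : ℓ i ≠ 0 := Nat.one_le_iff_ne_zero.1 (hℓ i)
    calc _ ≤ ((F i).card : ℝ) * θ i ^ ℓ i :=
          prRandomSubset_exists_le (hθ i).1 (hθ i).2 (hF i)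
      _ ≤ (F i).card * (min 1 (δ / 2) * ((F i).card : ℝ) ^ (-(1 : ℝ) / (ℓ i : ℝ))) ^ ℓ i := by
          gcongr
          exact (hθ i).1
      _ = min 1 (δ / 2) ^ ℓ i := by
          rw [mul_pow, mul_left_comm, mul_rpow_neg_one_div_pow hm',
            div_self (Nat.cast_ne_zero.2 hl), sub_self, Real.rpow_zero, mul_one]
      _ ≤ min 1 (δ / 2) := pow_le_of_le_one hε.le (min_le_left _ _) hl
      _ < δ := (min_le_right _ _).trans_lt (half_lt_self hδ)
  · intro h
    rw [Metric.tendsto_nhds]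
    intro δ hδ
    set D : ℝ := max C 1
    have hD0 : 0 < D := hC.trans_le (le_max_left _ _)
    set ε : ℝ := min 1 (δ / (2 * (D * 2 ^ L)))
    have hε : 0 < ε := by positivity
    filter_upwards [hpos, h.bound hε] with i hm hi
    have hm' : (0 : ℝ) < (F i).card := by exact_mod_cast hm
    have ha := Real.rpow_pos_of_pos hm' (-(1 : ℝ) / (ℓ i : ℝ))
    rw [Real.norm_of_nonneg (hθ i).1, Real.norm_of_nonneg ha.le] at hi
    have hl : ℓ i ≠ 0 := Nat.one_le_iff_ne_zero.1 (hℓ i)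
    have hsum := prRandomSubset_add_not (U := U i) (θ := θ i) (fun A => ∃ S ∈ F i, S ⊆ A)
    have hnn := prRandomSubset_nonneg (U := U i) (hθ i).1 (hθ i).2
      (fun A => ¬ ∃ S ∈ F i, S ⊆ A)
    have hnot := prRandomSubset_not_exists_le (hθ i).2 ha hε.le (min_le_left _ _) hi hD0.le
      (Finset.card_pos.1 hm) (hF i) (fun S hS R hRS hR => by
        rw [mul_rpow_neg_one_div_pow hm']
        have hRl : R.card ≤ ℓ i := (hF i S hS).2 ▸ Finset.card_le_card hRS
        rcases hRl.lt_or_eq with hlt | heq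
        · refine (hcount i R.card hR.card_pos (by omega) R (hRS.trans (hF i S hS).1) rfl).trans ?_
          gcongr
          exact le_max_left _ _
        · rw [heq, div_self (Nat.cast_ne_zero.2 hl), sub_self, Real.rpow_zero, mul_one]
          have hone : ((F i).filter (R ⊆ ·)).card ≤ 1 := by
            refine Finset.card_le_one_iff_subset_singleton.2 ⟨R, fun T hT => ?_⟩
            obtain ⟨hTF, hRT⟩ := Finset.mem_filter.1 hT
            exact Finset.mem_singleton.2
              (Finset.eq_of_subset_of_card_le hRT (by rw [(hF i T hTF).2, heq])).symm
          exact (Nat.cast_le_one.2 hone).trans (le_max_right _ _))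
    have hsmall : D * 2 ^ ℓ i * ε < δ :=
      calc D * 2 ^ ℓ i * ε ≤ D * 2 ^ L * (δ / (2 * (D * 2 ^ L))) := by
            gcongr
            · exact one_le_two
            · exact hL i
            · exact min_le_right _ _
        _ = δ / 2 := by field_simp
        _ < δ := half_lt_self hδ
    rw [Real.dist_eq, abs_lt]
    constructor <;> linarith
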